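/- Let G be a group with generating set X such that the Cayley graph Γ(G,X) is hyperbolic, and let H_1 and H_2 be subgroups each hyperbolically embedded in (G,X). Then there are only finitely many H_1-conjugacy classes of subgroups of the form H_1 ∩ gH_2g⁻¹ with g ∈ G (two such subgroups K, K′ being H_1-conjugate if K′ = hKh⁻¹ for some h ∈ H_1). -/

import Mathlib

open Pointwise

section BasicDefs

variable {G : Type*} [Group G]

/-- The word length of `g` with respect to the generating set `S`
(words use letters from `S ∪ S⁻¹`). -/
noncomputable def wordLength (S : Set G) (g : G) : ℕ :=
  sInf {n : ℕ | ∃ l : List G, l.length = n ∧ (∀ x ∈ l, x ∈ S ∨ x⁻¹ ∈ S) ∧ l.prod = g}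

/-- The word metric on `G` with respect to the generating set `S`. -/
noncomputable def wordDist (S : Set G) (g h : G) : ℝ :=
  (wordLength S (g⁻¹ * h) : ℝ)

/-- The closed `r`-neighborhood of a subset `A` with respect to the word metric `d_S`. -/
def nbhd (S : Set G) (r : ℝ) (A : Set G) : Set G :=
  {g : G | ∃ a ∈ A, wordDist S g a ≤ r}

/-- The distance between two subsets: the infimum of distances between their elements. -/
noncomputable def setDist (S : Set G) (A B : Set G) : ℝ :=
  sInf {r : ℝ | ∃ a ∈ A, ∃ b ∈ B, r = wordDist S a b}

/-- The conjugate subgroup `H^g = g H g⁻¹`. -/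
def conjSub (g : G) (H : Subgroup G) : Subgroup G :=
  H.map (MulAut.conj g).toMonoidHom

end BasicDefs

/-- `γ` restricted to `{0, …, n}` is a `(K, ε)`-quasigeodesic for the distance function `d`. -/
def IsQuasigeodesic {α : Type*} (d : α → α → ℝ) (K ε : ℝ) (n : ℕ) (γ : ℕ → α) : Prop :=
  ∀ i j : ℕ, i ≤ n → j ≤ n →
    (1 / K) * |(i : ℝ) - (j : ℝ)| - ε ≤ d (γ i) (γ j) ∧
      d (γ i) (γ j) ≤ K * |(i : ℝ) - (j : ℝ)| + ε

/-- `γ` restricted to `{0, …, n}` is a geodesic for the distance function `d`. -/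
def IsGeodesic {α : Type*} (d : α → α → ℝ) (n : ℕ) (γ : ℕ → α) : Prop :=
  ∀ i j : ℕ, i ≤ n → j ≤ n → d (γ i) (γ j) = |(i : ℝ) - (j : ℝ)|

/-- The path `γ` (on `{0, …, n}`) is `f`-stable: every `(K, ε)`-quasigeodesic with endpoints
on `γ` stays in the `f K ε`-neighborhood of `γ`. -/
def IsStablePath {α : Type*} (d : α → α → ℝ) (f : ℝ → ℝ → ℝ) (n : ℕ) (γ : ℕ → α) : Prop :=
  ∀ K ε : ℝ, 1 ≤ K → 0 ≤ ε → ∀ (m : ℕ) (η : ℕ → α),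
    IsQuasigeodesic d K ε m η →
    (∃ i ≤ n, η 0 = γ i) → (∃ i ≤ n, η m = γ i) →
    ∀ j ≤ m, ∃ i ≤ n, d (η j) (γ i) ≤ f K ε

/-- The Gromov product `⟨x, y⟩_w` with respect to a distance function `d`. -/
noncomputable def gromovProd {α : Type*} (d : α → α → ℝ) (w x y : α) : ℝ :=
  (d w x + d w y - d x y) / 2

/-- Gromov hyperbolicity of a distance function, via the four-point condition. -/
def IsHyperbolicDist {α : Type*} (d : α → α → ℝ) : Prop :=
  ∃ δ : ℝ, 0 ≤ δ ∧ ∀ w x y z : α,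
    min (gromovProd d w x y) (gromovProd d w y z) - δ ≤ gromovProd d w x z

section GroupDefs

variable {G : Type*} [Group G]

/-- `H` is a stable subgroup of `(G, d_S)` with stability function `f`: `H` has a finite
generating set `T` such that the inclusion `(H, d_T) → (G, d_S)` is a quasi-isometric
embedding sending every `d_T`-geodesic to an `f`-stable quasigeodesic of `(G, d_S)`. -/
def IsStableSubgroupWith (S : Set G) (H : Subgroup G) (f : ℝ → ℝ → ℝ) : Prop :=
  ∃ T : Set H, T.Finite ∧ Subgroup.closure T = ⊤ ∧
    (∃ μ c : ℝ, 1 ≤ μ ∧ 0 ≤ c ∧ ∀ h₁ h₂ : H,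
      (1 / μ) * wordDist T h₁ h₂ - c ≤ wordDist S (h₁ : G) (h₂ : G) ∧
        wordDist S (h₁ : G) (h₂ : G) ≤ μ * wordDist T h₁ h₂ + c) ∧
    ∀ (n : ℕ) (γ : ℕ → H), IsGeodesic (wordDist T) n γ →
      (∃ K ε : ℝ, 1 ≤ K ∧ 0 ≤ ε ∧
        IsQuasigeodesic (wordDist S) K ε n (fun i => (γ i : G))) ∧
      IsStablePath (wordDist S) f n (fun i => (γ i : G))

/-- `H` is a stable subgroup of `(G, d_S)`. -/
def IsStableSubgroup (S : Set G) (H : Subgroup G) : Prop :=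
  ∃ f : ℝ → ℝ → ℝ, IsStableSubgroupWith S H f

/-- The family `Q` of subgroups is hyperbolically embedded in `(G, X)`:
(Q1) geometric separation, (Q2) finite generation, (Q3) uniform quasi-isometric embedding. -/
def IsHypEmbFamily {G : Type*} [Group G] {ι : Type*} (X : Set G) (Q : ι → Subgroup G) : Prop :=
  (∀ ε : ℝ, 0 < ε → ∃ R : ℝ, ∀ (g : G) (i j : ι),
      (∃ a ∈ (Q i : Set G) ∩ nbhd X ε (g • (Q j : Set G)),
        ∃ b ∈ (Q i : Set G) ∩ nbhd X ε (g • (Q j : Set G)), R ≤ wordDist X a b) →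
      i = j ∧ g ∈ Q i) ∧
  ∃ Y : ι → Set G, (∀ i, (Y i).Finite ∧ Y i ⊆ (Q i : Set G) ∧ Subgroup.closure (Y i) = Q i) ∧
    ∃ μ c : ℝ, 1 ≤ μ ∧ 0 ≤ c ∧ ∀ i : ι, ∀ h ∈ Q i,
      (wordLength (Y i) h : ℝ) ≤ μ * (wordLength X h : ℝ) + c

/-- The subset `H` of `G` satisfies the WPD condition in `(G, X)`. -/
def WPDSet (X : Set G) (H : Set G) : Prop :=
  ∀ ε : ℝ, 0 < ε → ∃ N : ℝ, 0 < N ∧ ∀ h₁ h₂ : G, h₁ ∈ H → h₂ ∈ H →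
    N < wordDist X h₁ h₂ →
    {g : G | wordDist X h₁ (g * h₁) < ε ∧ wordDist X h₂ (g * h₂) < ε}.Finite

/-- A quasimorphism on `G`. -/
def IsQuasimorphism (q : G → ℝ) : Prop :=
  ∃ D : ℝ, 0 ≤ D ∧ ∀ x y : G, |q (x * y) - q x - q y| ≤ D

/-- A homogeneous quasimorphism on `G`. -/
def IsHomogeneousQM (q : G → ℝ) : Prop :=
  IsQuasimorphism q ∧ ∀ (x : G) (n : ℕ), q (x ^ n) = (n : ℝ) * q x

/-- `H` is a quasiconvex subgroup of `(G, d_S)`: every geodesic with endpoints in `H`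
lies in a uniformly bounded neighborhood of `H`. -/
def IsQuasiconvex (S : Set G) (H : Subgroup G) : Prop :=
  ∃ C : ℝ, 0 ≤ C ∧ ∀ (n : ℕ) (γ : ℕ → G), IsGeodesic (wordDist S) n γ →
    γ 0 ∈ H → γ n ∈ H → ∀ i ≤ n, ∃ h ∈ H, wordDist S (γ i) h ≤ C

end GroupDefs

section Helpers

variable {G : Type*} [Group G]

lemma hm_wl_le (S : Set G) (l : List G) (hl : ∀ x ∈ l, x ∈ S ∨ x⁻¹ ∈ S) :
    wordLength S l.prod ≤ l.length :=
  Nat.sInf_le ⟨l, rfl, hl, rfl⟩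

lemma hm_wl_exists (S : Set G) (g : G) (hg : g ∈ Subgroup.closure S) :
    ∃ l : List G, l.length = wordLength S g ∧ (∀ x ∈ l, x ∈ S ∨ x⁻¹ ∈ S) ∧ l.prod = g := by
  obtain ⟨l, hl, hp⟩ := Submonoid.exists_list_of_mem_closure
    (s := S ∪ S⁻¹) (x := g) (by rw [← Subgroup.closure_toSubmonoid]; exact hg)
  exact Nat.sInf_mem (s := {n : ℕ | ∃ l : List G, l.length = n ∧
    (∀ x ∈ l, x ∈ S ∨ x⁻¹ ∈ S) ∧ l.prod = g}) ⟨l.length, l, rfl, hl, hp⟩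

lemma hm_wl_one (S : Set G) : wordLength S (1 : G) = 0 := by
  have := hm_wl_le S [] (by simp)
  simpa using this

lemma hm_wl_inv_le (X : Set G) (hX : Subgroup.closure X = ⊤) (g : G) :
    wordLength X g⁻¹ ≤ wordLength X g := by
  obtain ⟨l, h1, h2, h3⟩ := hm_wl_exists X g (by rw [hX]; trivial)
  have := hm_wl_le X (l.map (·⁻¹)).reverse (by
    intro x hx
    simp only [List.mem_reverse, List.mem_map] at hx
    obtain ⟨y, hy, rfl⟩ := hx
    rw [inv_inv]
    exact (h2 y hy).symm)
  rw [← List.prod_inv_reverse, h3] at this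
  simpa [h1] using this

lemma hm_wl_inv (X : Set G) (hX : Subgroup.closure X = ⊤) (g : G) :
    wordLength X g⁻¹ = wordLength X g := by
  refine le_antisymm (hm_wl_inv_le X hX g) ?_
  simpa using hm_wl_inv_le X hX g⁻¹

lemma hm_wl_mul (X : Set G) (hX : Subgroup.closure X = ⊤) (g h : G) :
    wordLength X (g * h) ≤ wordLength X g + wordLength X h := by
  obtain ⟨l, h1, h2, h3⟩ := hm_wl_exists X g (by rw [hX]; trivial)
  obtain ⟨k, k1, k2, k3⟩ := hm_wl_exists X h (by rw [hX]; trivial)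
  have := hm_wl_le X (l ++ k) (by
    intro x hx
    rcases List.mem_append.1 hx with hx | hx
    · exact h2 x hx
    · exact k2 x hx)
  rw [List.prod_append, List.length_append, h3, k3, h1, k1] at this
  exact this

lemma hm_d_self (X : Set G) (a : G) : wordDist X a a = 0 := by
  simp [wordDist, hm_wl_one]

lemma hm_d_nonneg (X : Set G) (a b : G) : 0 ≤ wordDist X a b := by
  simp [wordDist]

lemma hm_d_comm (X : Set G) (hX : Subgroup.closure X = ⊤) (a b : G) :
    wordDist X a b = wordDist X b a := by
  unfold wordDist
  rw [← hm_wl_inv X hX]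
  simp

lemma hm_d_tri (X : Set G) (hX : Subgroup.closure X = ⊤) (a b c : G) :
    wordDist X a c ≤ wordDist X a b + wordDist X b c := by
  unfold wordDist
  have := hm_wl_mul X hX (a⁻¹ * b) (b⁻¹ * c)
  rw [show a⁻¹ * b * (b⁻¹ * c) = a⁻¹ * c by group] at this
  exact_mod_cast this

lemma hm_d_left (X : Set G) (k a b : G) :
    wordDist X (k * a) (k * b) = wordDist X a b := by
  unfold wordDist
  rw [show (k * a)⁻¹ * (k * b) = a⁻¹ * b by group]

lemma hm_geod (X : Set G) (hX : Subgroup.closure X = ⊤) (a b : G) :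
    ∃ (n : ℕ) (γ : ℕ → G), γ 0 = a ∧ γ n = b ∧ (n : ℝ) = wordDist X a b ∧
      ∀ i j, i ≤ j → j ≤ n → wordDist X (γ i) (γ j) = (j : ℝ) - i := by
  obtain ⟨l, h1, h2, h3⟩ := hm_wl_exists X (a⁻¹ * b) (by rw [hX]; trivial)
  have up : ∀ i j, i ≤ j → wordDist X (a * (l.take i).prod) (a * (l.take j).prod) ≤ (j : ℝ) - i := by
    intro i j hij
    have e : (l.take j).prod = (l.take i).prod * ((l.take j).drop i).prod := by
      rw [← List.prod_take_mul_prod_drop (l.take j) i, List.take_take, min_eq_left hij]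
    rw [hm_d_left]
    unfold wordDist
    rw [e, inv_mul_cancel_left]
    have := hm_wl_le X ((l.take j).drop i) (fun x hx =>
      h2 x (List.mem_of_mem_take (List.mem_of_mem_drop hx)))
    have h4 : ((l.take j).drop i).length ≤ j - i := by
      simp; omega
    have h5 : ((wordLength X ((l.take j).drop i).prod : ℕ) : ℝ) ≤ ((j - i : ℕ) : ℝ) := by
      exact_mod_cast this.trans h4
    rwa [Nat.cast_sub hij] at h5
  have e0 : a * (l.take 0).prod = a := by simp
  have en : a * (l.take l.length).prod = b := by simp [h3]
  have hn : (l.length : ℝ) = wordDist X a b := by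
    unfold wordDist; rw [h1]
  refine ⟨l.length, fun i => a * (l.take i).prod, e0, en, hn, ?_⟩
  intro i j hij hj
  refine le_antisymm (up i j hij) ?_
  have u1 := up 0 i (Nat.zero_le _)
  have u2 := up j l.length hj
  rw [e0] at u1
  rw [en] at u2
  have t1 := hm_d_tri X hX a (a * (l.take i).prod) b
  have t2 := hm_d_tri X hX (a * (l.take i).prod) (a * (l.take j).prod) b
  push_cast at u1
  linarith

lemma hm_chain {α : Type*} (d : α → α → ℝ) (δ : ℝ)
    (hδ : ∀ w x y z : α, min (gromovProd d w x y) (gromovProd d w y z) - δ ≤ gromovProd d w x z)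
    (w : α) (x : ℕ → α) (A : ℝ) (hA : ∀ i, A ≤ gromovProd d w (x i) (x (i + 1))) :
    ∀ m i : ℕ, A - m * δ ≤ gromovProd d w (x i) (x (i + 2 ^ m)) := by
  intro m
  induction m with
  | zero => intro i; simpa using hA i
  | succ m ih =>
    intro i
    have h1 := ih i
    have h2 := ih (i + 2 ^ m)
    have h3 := hδ w (x i) (x (i + 2 ^ m)) (x (i + 2 ^ m + 2 ^ m))
    have e : i + 2 ^ (m + 1) = i + 2 ^ m + 2 ^ m := by ring
    rw [e]
    have h4 := le_min h1 h2
    push_cast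
    linarith

lemma hm_log (A δ B c : ℝ) (hδ : 0 ≤ δ) :
    ∃ C : ℝ, 0 ≤ C ∧ ∀ D : ℝ, (∀ m : ℕ, B * D + c ≤ 2 ^ m → D ≤ A + δ * m) → D ≤ C := by
  have ht : Filter.Tendsto (fun m : ℕ => ((m : ℝ) ^ 1) / (2 : ℝ) ^ m) Filter.atTop (nhds 0) :=
    tendsto_pow_const_div_const_pow_of_one_lt 1 (by norm_num)
  set P : ℝ := |B| * (|A| + 2 * (δ + 1)) + |c| + 1 with hP
  have hPpos : 0 < P := by positivity
  have hev := ht.eventually (gt_mem_nhds (show (0 : ℝ) < 1 / P by positivity))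
  obtain ⟨m0, hm0⟩ := Filter.eventually_atTop.1 hev
  refine ⟨|A| + (δ + 1) * (m0 + 1), by positivity, ?_⟩
  intro D hD
  by_contra hcon
  push Not at hcon
  have hA := le_abs_self A
  have hq0 : (m0 : ℝ) + 1 ≤ (D - A) / (δ + 1) := by
    rw [le_div_iff₀ (by positivity)]
    nlinarith
  set m := ⌊(D - A) / (δ + 1)⌋₊ with hm
  have hm1 : m0 + 1 ≤ m := Nat.le_floor (by push_cast; exact hq0)
  have hq1 : (m : ℝ) ≤ (D - A) / (δ + 1) := Nat.floor_le (by have : (0:ℝ) ≤ m0 := by positivity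
                                                             linarith)
  have hq2 : (D - A) / (δ + 1) < m + 1 := Nat.lt_floor_add_one _
  rw [le_div_iff₀ (by positivity)] at hq1
  rw [div_lt_iff₀ (by positivity)] at hq2
  have hmpos : (1 : ℝ) ≤ m := by exact_mod_cast (by omega : 1 ≤ m)
  have h1 := hm0 m (by omega)
  rw [pow_one, div_lt_div_iff₀ (by positivity) hPpos] at h1
  have hD0 : 0 ≤ D := by
    have : 0 ≤ |A| + (δ + 1) * (m0 + 1) := by positivity
    linarith
  have hDm : D ≤ (|A| + 2 * (δ + 1)) * m := by
    have : |A| ≤ |A| * m := le_mul_of_one_le_right (abs_nonneg _) hmpos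
    nlinarith
  have hBD : B * D ≤ |B| * ((|A| + 2 * (δ + 1)) * m) :=
    (mul_le_mul_of_nonneg_right (le_abs_self B) hD0).trans
      (mul_le_mul_of_nonneg_left hDm (abs_nonneg _))
  have hc : c ≤ |c| * m := (le_abs_self c).trans (le_mul_of_one_le_right (abs_nonneg _) hmpos)
  have h2 := hD m (by rw [hP] at h1; nlinarith)
  nlinarith

/-- Quasiconvexity of geodesics between points of `H`. -/
lemma hm_qc (X : Set G) (hX : Subgroup.closure X = ⊤) (δ : ℝ) (hδ0 : 0 ≤ δ)
    (hδ : ∀ w x y z : G, min (gromovProd (wordDist X) w x y) (gromovProd (wordDist X) w y z) - δ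
      ≤ gromovProd (wordDist X) w x z)
    (H : Subgroup G) (Y : Set G) (hYf : Y.Finite) (hYH : Subgroup.closure Y = H)
    (μ c : ℝ) (hμ : 1 ≤ μ) (hq : ∀ h ∈ H, (wordLength Y h : ℝ) ≤ μ * (wordLength X h : ℝ) + c) :
    ∃ C : ℝ, 0 ≤ C ∧ ∀ (n : ℕ) (γ : ℕ → G), γ 0 ∈ H → γ n ∈ H →
      (∀ i j, i ≤ j → j ≤ n → wordDist X (γ i) (γ j) = (j : ℝ) - i) →
      ∀ i ≤ n, ∃ h ∈ H, wordDist X (γ i) h ≤ C := by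
  obtain ⟨M, hM⟩ : ∃ M : ℕ, ∀ y ∈ Y, wordLength X y ≤ M := by
    obtain ⟨M, hM⟩ := (hYf.image (wordLength X)).bddAbove
    exact ⟨M, fun y hy => hM ⟨y, hy, rfl⟩⟩
  obtain ⟨C, hC0, hC⟩ := hm_log (M / 2 + 2 * δ) δ (6 * μ) c hδ0
  refine ⟨C, hC0, ?_⟩
  intro n γ h0 hn hγ
  set f : G → ℕ := fun v => sInf (Set.image (fun h => wordLength X (v⁻¹ * h)) (H : Set G)) with hf
  have f_mem : ∀ v, ∃ h ∈ H, wordDist X v h = f v := by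
    intro v
    have := Nat.sInf_mem (s := Set.image (fun h => wordLength X (v⁻¹ * h)) (H : Set G))
      ⟨_, 1, H.one_mem, rfl⟩
    obtain ⟨h, hh, e⟩ := this
    exact ⟨h, hh, by unfold wordDist; exact_mod_cast e⟩
  have f_le : ∀ v, ∀ h ∈ H, (f v : ℝ) ≤ wordDist X v h := by
    intro v h hh
    unfold wordDist
    have := Nat.sInf_le (s := Set.image (fun h => wordLength X (v⁻¹ * h)) (H : Set G)) ⟨h, hh, rfl⟩
    exact_mod_cast this
  obtain ⟨i0, hi0, hmax⟩ := Finset.exists_max_image (Finset.range (n + 1)) (fun i => f (γ i))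
    ⟨0, by simp⟩
  have hi0n : i0 ≤ n := by simpa [Nat.lt_succ_iff] using hi0
  set D := f (γ i0) with hD
  suffices hDC : (D : ℝ) ≤ C by
    intro i hi
    obtain ⟨h, hh, e⟩ := f_mem (γ i)
    refine ⟨h, hh, ?_⟩
    rw [e]
    have : (f (γ i) : ℝ) ≤ D := by exact_mod_cast hmax i (by simp; omega)
    linarith
  set w := γ i0 with hw
  have hwH : ∀ h ∈ H, (D : ℝ) ≤ wordDist X w h := f_le w
  have tri := hm_d_tri X hX
  have comm := hm_d_comm X hX
  have nn := hm_d_nonneg X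
  -- left point
  obtain ⟨iy, hiy, y', hy', hyy, hgy, hyw⟩ : ∃ iy ≤ i0, ∃ y' ∈ H, wordDist X (γ iy) y' ≤ D ∧
      (D : ℝ) ≤ gromovProd (wordDist X) w (γ iy) y' ∧ wordDist X (γ iy) w ≤ 2 * D := by
    by_cases hc : 2 * D ≤ i0
    · obtain ⟨y', hy', e⟩ := f_mem (γ (i0 - 2 * D))
      have e2 : (f (γ (i0 - 2 * D)) : ℝ) ≤ D := by exact_mod_cast hmax _ (by simp; omega)
      have e3 := hγ (i0 - 2 * D) i0 (by omega) hi0n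
      rw [Nat.cast_sub hc] at e3
      push_cast at e3
      refine ⟨i0 - 2 * D, by omega, y', hy', by linarith, ?_, by linarith⟩
      unfold gromovProd
      have t1 := tri w y' (γ (i0 - 2 * D))
      have c1 := comm (γ (i0 - 2 * D)) w
      have c2 := comm (γ (i0 - 2 * D)) y'
      linarith
    · have e3 := hγ 0 i0 (by omega) hi0n
      have : (i0 : ℝ) ≤ 2 * D := by exact_mod_cast (by omega : i0 ≤ 2 * D)
      push_cast at e3
      refine ⟨0, by omega, γ 0, h0, by rw [hm_d_self]; positivity, ?_, by linarith⟩
      unfold gromovProd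
      have := hwH _ h0
      rw [hm_d_self]
      linarith
  obtain ⟨iz, hiz, hizn, z', hz', hzz, hgz, hzw⟩ : ∃ iz, i0 ≤ iz ∧ iz ≤ n ∧ ∃ z' ∈ H,
      wordDist X (γ iz) z' ≤ D ∧
      (D : ℝ) ≤ gromovProd (wordDist X) w z' (γ iz) ∧ wordDist X w (γ iz) ≤ 2 * D := by
    by_cases hc : i0 + 2 * D ≤ n
    · obtain ⟨y', hy', e⟩ := f_mem (γ (i0 + 2 * D))
      have e2 : (f (γ (i0 + 2 * D)) : ℝ) ≤ D := by exact_mod_cast hmax _ (by simp; omega)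
      have e3 := hγ i0 (i0 + 2 * D) (by omega) hc
      push_cast at e3
      refine ⟨i0 + 2 * D, by omega, hc, y', hy', by linarith, ?_, by linarith⟩
      unfold gromovProd
      have t1 := tri w y' (γ (i0 + 2 * D))
      have c2 := comm (γ (i0 + 2 * D)) y'
      linarith
    · have e3 := hγ i0 n hi0n le_rfl
      have : (n : ℝ) ≤ i0 + 2 * D := by exact_mod_cast (by omega : n ≤ i0 + 2 * D)
      refine ⟨n, hi0n, le_rfl, γ n, hn, by rw [hm_d_self]; positivity, ?_, by linarith⟩
      unfold gromovProd
      have := hwH _ hn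
      rw [hm_d_self]
      linarith
  have hyz0 : gromovProd (wordDist X) w (γ iy) (γ iz) = 0 := by
    unfold gromovProd
    have e1 := hγ iy i0 hiy hi0n
    have e2 := hγ i0 iz hiz hizn
    have e3 := hγ iy iz (hiy.trans hiz) hizn
    have e4 := comm (γ iy) w
    linarith
  refine hC D ?_
  intro m hm
  obtain ⟨l, l1, l2, l3⟩ := hm_wl_exists Y (y'⁻¹ * z') (by
    rw [hYH]; exact H.mul_mem (H.inv_mem hy') hz')
  have hll : l.length ≤ 2 ^ m := by
    have e1 := hq (y'⁻¹ * z') (H.mul_mem (H.inv_mem hy') hz')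
    have e2 : wordDist X y' z' ≤ 6 * D := by
      have t1 := tri y' (γ iy) z'
      have t2 := tri (γ iy) w z'
      have t3 := tri w (γ iz) z'
      have c1 := comm y' (γ iy)
      linarith
    have e3 : (wordLength X (y'⁻¹ * z') : ℝ) ≤ 6 * D := e2
    have e4 : (l.length : ℝ) ≤ 2 ^ m := by
      rw [l1]
      nlinarith
    exact_mod_cast e4
  have hlH : ∀ x ∈ l, x ∈ H := by
    intro x hx
    have hs : ∀ t ∈ Y, t ∈ H := fun t ht => hYH ▸ Subgroup.subset_closure ht
    rcases l2 x hx with h | h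
    · exact hs _ h
    · exact H.inv_mem_iff.1 (hs _ h)
  have hlM : ∀ x ∈ l, wordLength X x ≤ M := by
    intro x hx
    rcases l2 x hx with h | h
    · exact hM _ h
    · rw [← hm_wl_inv X hX]; exact hM _ h
  have hxH : ∀ i, y' * (l.take i).prod ∈ H := fun i =>
    H.mul_mem hy' (H.list_prod_mem fun x hx => hlH x (List.mem_of_mem_take hx))
  have hch := hm_chain (wordDist X) δ hδ w (fun i => y' * (l.take i).prod) (D - M / 2) (by
    intro i
    have s1 := hwH _ (hxH i)
    have s2 := hwH _ (hxH (i + 1))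
    have s3 : wordDist X (y' * (l.take i).prod) (y' * (l.take (i + 1)).prod) ≤ M := by
      rw [hm_d_left]
      unfold wordDist
      by_cases hi : i < l.length
      · rw [List.prod_take_succ l i hi, inv_mul_cancel_left]
        exact_mod_cast hlM _ (List.getElem_mem hi)
      · rw [List.take_of_length_le (by omega), List.take_of_length_le (by omega),
          inv_mul_cancel, hm_wl_one]
        exact_mod_cast Nat.zero_le M
    simp only [gromovProd]
    linarith) m 0
  have ez : y' * (l.take (0 + 2 ^ m)).prod = z' := by
    rw [List.take_of_length_le (by omega), l3]; group
  simp only [ez] at hch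
  simp only [List.take_zero, List.prod_nil, mul_one] at hch
  have q1 := hδ w (γ iy) y' z'
  have q2 := hδ w (γ iy) z' (γ iz)
  have mδ : 0 ≤ m * δ := by positivity
  have hM0 : (0 : ℝ) ≤ M := by positivity
  have q3 : (D : ℝ) - M / 2 - m * δ ≤ min (gromovProd (wordDist X) w (γ iy) y')
    (gromovProd (wordDist X) w y' z') := le_min (by linarith) hch
  have q4 : (D : ℝ) - M / 2 - m * δ - δ ≤ min (gromovProd (wordDist X) w (γ iy) z')
    (gromovProd (wordDist X) w z' (γ iz)) := le_min (by linarith) (by linarith)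
  linarith

/-- Quasiconvexity for points with small Gromov product. -/
lemma hm_qc2 (X : Set G) (hX : Subgroup.closure X = ⊤) (δ : ℝ) (hδ0 : 0 ≤ δ)
    (hδ : ∀ w x y z : G, min (gromovProd (wordDist X) w x y) (gromovProd (wordDist X) w y z) - δ
      ≤ gromovProd (wordDist X) w x z)
    (H : Subgroup G) (Y : Set G) (hYf : Y.Finite) (hYH : Subgroup.closure Y = H)
    (μ c : ℝ) (hμ : 1 ≤ μ) (hq : ∀ h ∈ H, (wordLength Y h : ℝ) ≤ μ * (wordLength X h : ℝ) + c) :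
    ∃ C : ℝ, 0 ≤ C ∧ ∀ a ∈ H, ∀ b ∈ H, ∀ w : G, gromovProd (wordDist X) w a b ≤ 2 * δ →
      ∃ h ∈ H, wordDist X w h ≤ C := by
  obtain ⟨C, hC0, hC⟩ := hm_qc X hX δ hδ0 hδ H Y hYf hYH μ c hμ hq
  refine ⟨C + 6 * δ, by positivity, ?_⟩
  intro a ha b hb w hw
  obtain ⟨n, γ, g0, gn, hn, hγ⟩ := hm_geod X hX a b
  have tri := hm_d_tri X hX
  have comm := hm_d_comm X hX
  set t := min (wordLength X (w⁻¹ * a)) n with ht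
  have hwa : wordDist X w a = (wordLength X (w⁻¹ * a) : ℝ) := rfl
  obtain ⟨h, hh, e⟩ := hC n γ (g0 ▸ ha) (gn ▸ hb) hγ t (min_le_right _ _)
  refine ⟨h, hh, ?_⟩
  suffices wordDist X w (γ t) ≤ 6 * δ by
    have := tri w (γ t) h
    linarith
  have d1 := hγ 0 t (Nat.zero_le _) (min_le_right _ _)
  have d2 := hγ t n (min_le_right _ _) le_rfl
  rw [g0] at d1
  rw [gn] at d2
  push_cast at d1
  have four := hδ w a (γ t) b
  have c1 := comm (γ t) a
  have hmin := min_le_iff.1 (show min (gromovProd (wordDist X) w a (γ t))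
    (gromovProd (wordDist X) w (γ t) b) ≤ gromovProd (wordDist X) w a b + δ by linarith)
  have tr := tri a w b
  have ca := comm a w
  have nb := hm_d_nonneg X w b
  rcases le_total (wordLength X (w⁻¹ * a)) n with hc | hc
  · have ht' : (t : ℝ) = wordDist X w a := by rw [ht, min_eq_left hc, hwa]
    unfold gromovProd at hw hmin
    rcases hmin with h | h <;> linarith
  · have ht' : (t : ℝ) = n := by rw [ht, min_eq_right hc]
    have hc' : (n : ℝ) ≤ wordDist X w a := by rw [hwa]; exact_mod_cast hc
    unfold gromovProd at hw hmin
    rcases hmin with h | h <;> linarith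

lemma hm_ball_finite (X : Set G) (H : Subgroup G) (Y : Set G) (hYf : Y.Finite)
    (hYH : Subgroup.closure Y = H)
    (μ c : ℝ) (hμ : 1 ≤ μ) (hq : ∀ h ∈ H, (wordLength Y h : ℝ) ≤ μ * (wordLength X h : ℝ) + c)
    (r : ℝ) : {h : G | h ∈ H ∧ (wordLength X h : ℝ) ≤ r}.Finite := by
  set Z : Set G := Y ∪ Y⁻¹ with hZ
  have hZf : Z.Finite := hYf.union hYf.inv
  have : Finite Z := hZf
  refine ((List.finite_length_le Z ⌈μ * r + c⌉₊).image
    (fun l : List Z => (l.map Subtype.val).prod)).subset ?_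
  rintro h ⟨hh, hr⟩
  obtain ⟨l, l1, l2, l3⟩ := hm_wl_exists Y h (by rw [hYH]; exact hh)
  have hlZ : ∀ x ∈ l, x ∈ Z := fun x hx => by
    rcases l2 x hx with h | h
    · exact Or.inl h
    · exact Or.inr h
  lift l to List Z using hlZ
  refine ⟨l, ?_, l3⟩
  have e := hq h hh
  rw [← l1] at e
  simp only [List.length_map] at e
  have : (l.length : ℝ) ≤ (⌈μ * r + c⌉₊ : ℝ) := (by nlinarith : (l.length : ℝ) ≤ μ * r + c).trans
    (Nat.le_ceil _)
  exact_mod_cast this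

lemma hm_mem_conj (g : G) (H : Subgroup G) (x : G) : x ∈ conjSub g H ↔ g⁻¹ * x * g ∈ H := by
  unfold conjSub
  rw [Subgroup.mem_map]
  constructor
  · rintro ⟨y, hy, rfl⟩
    simpa [mul_assoc] using hy
  · intro h
    exact ⟨_, h, by simp [mul_assoc]⟩

lemma hm_conj_inf (h g : G) (H₁ H₂ : Subgroup G) (hh : h ∈ H₁) :
    H₁ ⊓ conjSub (h * g) H₂ = conjSub h (H₁ ⊓ conjSub g H₂) := by
  ext x
  simp only [Subgroup.mem_inf, hm_mem_conj]
  have e1 : (h * g)⁻¹ * x * (h * g) = g⁻¹ * (h⁻¹ * x * h) * g := by group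
  rw [e1, Subgroup.mul_mem_cancel_right _ hh, Subgroup.mul_mem_cancel_left _ (H₁.inv_mem hh)]

lemma hm_conj_right (g k : G) (H : Subgroup G) (hk : k ∈ H) :
    conjSub (g * k) H = conjSub g H := by
  ext x
  simp only [hm_mem_conj]
  have e1 : (g * k)⁻¹ * x * (g * k) = k⁻¹ * (g⁻¹ * x * g) * k := by group
  rw [e1, Subgroup.mul_mem_cancel_right _ hk, Subgroup.mul_mem_cancel_left _ (H.inv_mem hk)]

lemma hm_conj_one (H : Subgroup G) : conjSub (1 : G) H = H := by
  ext x; simp [hm_mem_conj]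

end Helpers

/-- **Finitely many `H₁`-conjugacy classes of intersections `H₁ ∩ H₂^g`.** -/
theorem finitely_many_H1_conj_classes {G : Type*} [Group G] (X : Set G)
    (hXgen : Subgroup.closure X = ⊤) (hhyp : IsHyperbolicDist (wordDist X))
    (H₁ H₂ : Subgroup G)
    (he₁ : IsHypEmbFamily X (fun _ : Fin 1 => H₁))
    (he₂ : IsHypEmbFamily X (fun _ : Fin 1 => H₂)) :
    ∃ F : Finset (Subgroup G), ∀ g : G, ∃ K ∈ F, ∃ h ∈ H₁,
      H₁ ⊓ conjSub g H₂ = conjSub h K := by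
  classical
  obtain ⟨δ, hδ0, hδ⟩ := hhyp
  obtain ⟨-, Y₁, hY₁, μ₁, c₁, hμ₁, hc₁, hq₁⟩ := he₁
  obtain ⟨hsep, Y₂, hY₂, μ₂, c₂, hμ₂, hc₂, hq₂⟩ := he₂
  obtain ⟨hf₁, -, hcl₁⟩ := hY₁ 0
  obtain ⟨hf₂, -, hcl₂⟩ := hY₂ 0
  replace hq₁ := hq₁ 0
  replace hq₂ := hq₂ 0
  have tri := hm_d_tri X hXgen
  have comm := hm_d_comm X hXgen
  have hball := hm_ball_finite X H₁ (Y₁ 0) hf₁ hcl₁ μ₁ c₁ hμ₁ hq₁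
  obtain ⟨C₁, hC₁0, hC₁⟩ := hm_qc2 X hXgen δ hδ0 hδ H₁ (Y₁ 0) hf₁ hcl₁ μ₁ c₁ hμ₁ hq₁
  obtain ⟨C₂, hC₂0, hC₂⟩ := hm_qc2 X hXgen δ hδ0 hδ H₂ (Y₂ 0) hf₂ hcl₂ μ₂ c₂ hμ₂ hq₂
  -- the distance at which points of `H₁` are close to `g H₂`
  set D : ℝ := C₁ + C₂ + 1 with hD
  obtain ⟨R, hR⟩ := hsep (2 * D) (by positivity)
  obtain ⟨i₁, hi₁⟩ := exists_nat_gt (4 * δ + C₁)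
  obtain ⟨s, hs⟩ := exists_nat_gt (R + 2 * C₁ + 2 * D)
  -- property of pairs
  set P : G → G → Prop := fun b g => (∃ p ∈ H₂, wordDist X 1 (g * p) ≤ D) ∧
    (∃ q ∈ H₂, wordDist X b (g * q) ≤ D) with hP
  have key : ∀ b g g', R + 2 * D ≤ wordDist X 1 b → P b g → P b g' → g⁻¹ * g' ∈ H₂ := by
    rintro b g g' hb ⟨⟨p, hp, hpd⟩, q, hq, hqd⟩ ⟨⟨p', hp', hpd'⟩, q', hq', hqd'⟩
    refine (hR (g⁻¹ * g') 0 0 ⟨p, ⟨hp, g⁻¹ * g' * p', ⟨p', hp', rfl⟩, ?_⟩, q,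
      ⟨hq, g⁻¹ * g' * q', ⟨q', hq', rfl⟩, ?_⟩, ?_⟩).2
    · rw [← hm_d_left X g, show g * (g⁻¹ * g' * p') = g' * p' by group]
      have := tri (g * p) 1 (g' * p')
      have := comm (g * p) 1
      linarith
    · rw [← hm_d_left X g, show g * (g⁻¹ * g' * q') = g' * q' by group]
      have := tri (g * q) b (g' * q')
      have := comm (g * q) b
      linarith
    · rw [← hm_d_left X g]
      have t1 := tri 1 (g * p) b
      have t2 := tri (g * p) (g * q) b
      have := comm (g * q) b
      linarith
  -- the finite family
  have hfinA : {K : Subgroup G | (K : Set G) ⊆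
      {h : G | h ∈ H₁ ∧ (wordLength X h : ℝ) ≤ 2 * i₁ + s}}.Finite := by
    refine Set.Finite.of_injOn (f := fun K : Subgroup G => (K : Set G))
      (t := {A | A ⊆ {h : G | h ∈ H₁ ∧ (wordLength X h : ℝ) ≤ 2 * i₁ + s}}) ?_ ?_ ?_
    · intro K hK; exact hK
    · exact SetLike.coe_injective.injOn
    · exact (hball _).finite_subsets
  set gb : G → G := fun b => if h : ∃ g, P b g then h.choose else 1 with hgb
  have hfinB : ((fun b => H₁ ⊓ conjSub (gb b) H₂) ''
      {h : G | h ∈ H₁ ∧ (wordLength X h : ℝ) ≤ s + 2 * C₁}).Finite := (hball _).image _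
  refine ⟨(hfinA.union hfinB).toFinset, ?_⟩
  intro g₀
  -- minimal representative of the double coset
  obtain ⟨g, a, ha, k₂, hk₂, hg₀, hgmin⟩ : ∃ g, ∃ a ∈ H₁, ∃ k₂ ∈ H₂, g₀ = a * (g * k₂) ∧
      ∀ x ∈ H₁, ∀ y ∈ H₂, wordDist X 1 g ≤ wordDist X x (g * y) := by
    set S : Set ℕ := {n | ∃ x ∈ H₁, ∃ y ∈ H₂, wordLength X (x * g₀ * y) = n} with hS
    have hne : S.Nonempty := ⟨_, 1, H₁.one_mem, 1, H₂.one_mem, rfl⟩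
    obtain ⟨x, hx, y, hy, e⟩ := Nat.sInf_mem hne
    refine ⟨x * g₀ * y, x⁻¹, H₁.inv_mem hx, y⁻¹, H₂.inv_mem hy, by group, ?_⟩
    intro x' hx' y' hy'
    have := Nat.sInf_le (s := S) (m := wordLength X ((x'⁻¹ * x) * g₀ * (y * y')))
      ⟨_, H₁.mul_mem (H₁.inv_mem hx') hx, _, H₂.mul_mem hy hy', rfl⟩
    rw [← e] at this
    unfold wordDist
    rw [inv_one, one_mul, show x'⁻¹ * (x * g₀ * y * y') = (x'⁻¹ * x) * g₀ * (y * y') by group]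
    exact_mod_cast this
  rw [hg₀, hm_conj_inf _ _ _ _ ha, hm_conj_right _ _ _ hk₂]
  by_cases hsmall : ∀ k ∈ H₁ ⊓ conjSub g H₂, (wordLength X k : ℝ) ≤ 2 * i₁ + s
  · refine ⟨H₁ ⊓ conjSub g H₂, ?_, a, ha, rfl⟩
    rw [Set.Finite.mem_toFinset]
    exact Or.inl fun k hk => ⟨hk.1, hsmall k hk⟩
  push Not at hsmall
  obtain ⟨k, ⟨hk1, hk2⟩, hkl⟩ := hsmall
  have hk2' : g⁻¹ * k * g ∈ H₂ := (hm_mem_conj _ _ _).1 hk2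
  obtain ⟨n, γ, e0, en, hn, hγ⟩ := hm_geod X hXgen 1 k
  have hnl : (2 * i₁ + s : ℝ) < n := by
    rw [hn]; unfold wordDist; simpa using hkl
  have hnl' : 2 * i₁ + s < n := by exact_mod_cast hnl
  have near : ∀ i, i₁ ≤ i → i + i₁ ≤ n → ∃ h ∈ H₁, wordDist X (γ i) h ≤ C₁ ∧
      ∃ p ∈ H₂, wordDist X h (g * p) ≤ D := by
    intro i hi hin
    have d1 := hγ 0 i (Nat.zero_le _) (by omega)
    have d2 := hγ i n (by omega) le_rfl
    rw [e0] at d1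
    rw [en] at d2
    push_cast at d1
    have c1 := comm 1 (γ i)
    have hgp : gromovProd (wordDist X) (γ i) 1 k = 0 := by
      unfold gromovProd
      linarith
    obtain ⟨h, hh, hhd⟩ := hC₁ 1 H₁.one_mem k hk1 (γ i) (by rw [hgp]; positivity)
    refine ⟨h, hh, hhd, ?_⟩
    have hir : (i₁ : ℝ) ≤ i := by exact_mod_cast hi
    have hinr : (i : ℝ) + i₁ ≤ n := by exact_mod_cast hin
    have chh := comm (γ i) h
    have q1 := hδ (γ i) 1 g k
    have q2 := hδ (γ i) g (k * g) k
    have n1 : 2 * δ < gromovProd (wordDist X) (γ i) 1 g := by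
      have m1 := hgmin h hh 1 H₂.one_mem
      rw [mul_one] at m1
      have := tri h (γ i) g
      unfold gromovProd
      linarith
    have n2 : 2 * δ < gromovProd (wordDist X) (γ i) (k * g) k := by
      have m1 := hgmin h hh _ hk2'
      rw [show g * (g⁻¹ * k * g) = k * g by group] at m1
      have t := tri h (γ i) (k * g)
      have m2 : wordDist X (k * g) k = wordDist X 1 g := by
        rw [comm]
        simpa using hm_d_left X k 1 g
      unfold gromovProd
      linarith
    have n3 : gromovProd (wordDist X) (γ i) g (k * g) ≤ 2 * δ := by
      by_contra hcon
      push Not at hcon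
      have r2 := lt_min hcon n2
      have r1 : δ < min (gromovProd (wordDist X) (γ i) 1 g)
        (gromovProd (wordDist X) (γ i) g k) := lt_min (by linarith) (by linarith)
      linarith
    have tr : gromovProd (wordDist X) (g⁻¹ * γ i) 1 (g⁻¹ * k * g) ≤ 2 * δ := by
      unfold gromovProd at n3 ⊢
      rw [← hm_d_left X g (g⁻¹ * γ i) 1, ← hm_d_left X g (g⁻¹ * γ i) (g⁻¹ * k * g),
        ← hm_d_left X g 1 (g⁻¹ * k * g), mul_one, mul_inv_cancel_left,
        show g * (g⁻¹ * k * g) = k * g by group]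
      exact n3
    obtain ⟨p, hp, hpd⟩ := hC₂ 1 H₂.one_mem _ hk2' _ tr
    refine ⟨p, hp, ?_⟩
    rw [← hm_d_left X g, mul_inv_cancel_left] at hpd
    have := tri h (γ i) (g * p)
    linarith
  obtain ⟨h, hh, hd, p, hp, hpd⟩ := near i₁ le_rfl (by omega)
  obtain ⟨h', hh', hd', p', hp', hpd'⟩ := near (i₁ + s) (by omega) (by omega)
  have dd := hγ i₁ (i₁ + s) (by omega) (by omega)
  push_cast at dd
  have hbl : wordDist X 1 (h⁻¹ * h') = wordDist X h h' := by
    rw [← hm_d_left X h]; simp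
  have hup : wordDist X h h' ≤ s + 2 * C₁ := by
    have t1 := tri h (γ i₁) h'
    have t2 := tri (γ i₁) (γ (i₁ + s)) h'
    have := comm h (γ i₁)
    linarith
  have hlo : s - 2 * C₁ ≤ wordDist X h h' := by
    have t1 := tri (γ i₁) h (γ (i₁ + s))
    have t2 := tri h h' (γ (i₁ + s))
    have := comm h' (γ (i₁ + s))
    linarith
  set b := h⁻¹ * h' with hb
  have hPb : P b (h⁻¹ * g) := by
    refine ⟨⟨p, hp, ?_⟩, p', hp', ?_⟩
    · rw [← hm_d_left X h, show h * (h⁻¹ * g * p) = g * p by group, mul_one]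
      exact hpd
    · rw [← hm_d_left X h, show h * (h⁻¹ * g * p') = g * p' by group, hb, mul_inv_cancel_left]
      exact hpd'
  have hPgb : P b (gb b) := by
    have hex : ∃ g, P b g := ⟨_, hPb⟩
    simp only [hgb, dif_pos hex]
    exact hex.choose_spec
  have hcos := key b _ _ (by rw [hbl]; linarith) hPgb hPb
  refine ⟨H₁ ⊓ conjSub (gb b) H₂, ?_, a * h, H₁.mul_mem ha hh, ?_⟩
  · rw [Set.Finite.mem_toFinset]
    refine Or.inr ⟨b, ⟨H₁.mul_mem (H₁.inv_mem hh) hh', ?_⟩, rfl⟩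
    have : (wordLength X b : ℝ) = wordDist X 1 b := by simp [wordDist]
    rw [this, hbl]
    exact hup
  · have e1 : conjSub (gb b) H₂ = conjSub (h⁻¹ * g) H₂ := by
      rw [← hm_conj_right (gb b) _ H₂ hcos, mul_inv_cancel_left]
    rw [e1, ← hm_conj_inf a g H₁ H₂ ha, ← hm_conj_inf _ _ _ _ (H₁.mul_mem ha hh)]
    congr 2
    group
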